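/- For all natural numbers n ≥ 1 and N ≥ 2, the integer n(n+1)(Ψ(N) - 3φ(N)) + 8·ε'(n,N) is divisible by 12, where ε'(n,N) = 1 if N = 3 and n ≡ 1 (mod 3) and ε'(n,N) = 0 otherwise. Consequently n(n+1)(Ψ(N) - 3φ(N))/12 + (2/3)·ε'(n,N) is a nonnegative integer. -/

import Mathlib

/-! Sorting the pairs in `[0, N)²` by the value of `gcd(k₁, k₂, N)` gives `∑_{d ∣ N} Ψ(d) = N²`
(`sum_Psi`). Strong induction on this recurrence, read modulo a prime `p ∈ {2, 3}`, shows
`p ∣ Ψ(N)` for every `N ∉ {1, p}` (`dvd_Psi`): the proper divisors contribute only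
`Ψ(1) = 1`, together with `Ψ(p) ≡ -1` when `p ∣ N`, and `N² ≡ 1` when `p ∤ N`.
Since `φ(N)` is even for `N > 2`, it follows that `6 ∣ Ψ(N) - 3φ(N)` for `N ≠ 3`, and `n(n+1)`
supplies the missing factor `2`; the case `N = 3` is a direct computation with `Ψ(3) = 8`.

For nonnegativity, every unit `u` modulo `N ≥ 2` gives three distinct primitive pairs
`(u, 0)`, `(0, u)`, `(u, u)`, whence `3φ(N) ≤ Ψ(N)`.
-/

/-- `Psi d` is the two-dimensional analogue of Euler's totient function:
the number of pairs `(k₁,k₂)` with `0 ≤ k₁,k₂ < d` and `gcd(k₁,k₂,d) = 1`. -/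
noncomputable def Psi (d : ℕ) : ℕ :=
  Nat.card {p : ℕ × ℕ // p.1 < d ∧ p.2 < d ∧ Nat.gcd (Nat.gcd p.1 p.2) d = 1}

/-- The finite set of primitive pairs modulo `d`, i.e. the pairs counted by `Psi d`. -/
def primPairs (d : ℕ) : Finset (ℕ × ℕ) :=
  {p ∈ Finset.range d ×ˢ Finset.range d | Nat.gcd (Nat.gcd p.1 p.2) d = 1}

lemma mem_primPairs {d : ℕ} {p : ℕ × ℕ} :
    p ∈ primPairs d ↔ p.1 < d ∧ p.2 < d ∧ Nat.gcd (Nat.gcd p.1 p.2) d = 1 := by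
  simp [primPairs, and_assoc]

lemma Psi_eq_card (d : ℕ) : Psi d = (primPairs d).card :=
  Nat.subtype_card _ fun _ => mem_primPairs

lemma Psi_one : Psi 1 = 1 := by rw [Psi_eq_card]; decide

lemma Psi_two : Psi 2 = 3 := by rw [Psi_eq_card]; decide

lemma Psi_three : Psi 3 = 8 := by rw [Psi_eq_card]; decide

/-- Dividing by `g` identifies the pairs in `[0, gd)²` whose gcd with `gd` is `g` with the
primitive pairs modulo `d`. -/
lemma card_gcd_fiber (g d : ℕ) (hg : 0 < g) :
    ({p ∈ Finset.range (g * d) ×ˢ Finset.range (g * d) |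
      Nat.gcd (Nat.gcd p.1 p.2) (g * d) = g} : Finset (ℕ × ℕ)).card = Psi d := by
  rw [Psi_eq_card]
  symm
  refine Finset.card_bij (fun p _ => (g * p.1, g * p.2)) ?_ ?_ ?_
  · rintro ⟨a, b⟩ h
    obtain ⟨h1, h2, h3⟩ := mem_primPairs.1 h
    simp only [Finset.mem_filter, Finset.mem_product, Finset.mem_range, Nat.gcd_mul_left]
    exact ⟨⟨Nat.mul_lt_mul_of_pos_left h1 hg, Nat.mul_lt_mul_of_pos_left h2 hg⟩, by
      simp only at h3; rw [h3, mul_one]⟩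
  · rintro ⟨a, b⟩ - ⟨a', b'⟩ - h
    simpa [hg.ne'] using h
  · rintro ⟨a, b⟩ h
    simp only [Finset.mem_filter, Finset.mem_product, Finset.mem_range] at h
    obtain ⟨⟨h1, h2⟩, h3⟩ := h
    have hab : g ∣ Nat.gcd a b := by
      have := Nat.gcd_dvd_left (Nat.gcd a b) (g * d)
      rwa [h3] at this
    obtain ⟨x, rfl⟩ := hab.trans (Nat.gcd_dvd_left _ _)
    obtain ⟨y, rfl⟩ := hab.trans (Nat.gcd_dvd_right _ _)
    rw [Nat.gcd_mul_left, Nat.gcd_mul_left] at h3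
    exact ⟨(x, y), mem_primPairs.2 ⟨Nat.lt_of_mul_lt_mul_left h1, Nat.lt_of_mul_lt_mul_left h2,
      Nat.eq_of_mul_eq_mul_left hg (h3.trans (mul_one g).symm)⟩, rfl⟩

lemma sum_Psi (N : ℕ) (hN : 0 < N) : ∑ d ∈ N.divisors, Psi d = N ^ 2 := by
  have h := Finset.card_eq_sum_card_fiberwise
    (s := Finset.range N ×ˢ Finset.range N) (t := N.divisors)
    (f := fun p => Nat.gcd (Nat.gcd p.1 p.2) N)
    (fun p _ => Nat.mem_divisors.2 ⟨Nat.gcd_dvd_right _ _, hN.ne'⟩)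
  rw [Finset.card_product, Finset.card_range, ← sq] at h
  rw [h, ← Nat.sum_div_divisors N Psi]
  refine Finset.sum_congr rfl fun g hg => ?_
  obtain ⟨d, rfl⟩ := Nat.dvd_of_mem_divisors hg
  have hg0 : 0 < g := Nat.pos_of_mul_pos_right hN
  rw [Nat.mul_div_cancel_left d hg0, card_gcd_fiber g d hg0]

/-- The hypotheses on `p` are that `a ^ 2 ≡ 1` modulo `p` whenever `p ∤ a` (so `p` is `2` or `3`)
and that `Ψ(p) ≡ -1` modulo `p`. -/
lemma dvd_Psi (p : ℕ) (hp : 1 < p) (hsq : ∀ a : ℤ, ¬ (p : ℤ) ∣ a → (p : ℤ) ∣ a ^ 2 - 1)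
    (hPsi : p ∣ 1 + Psi p) (N : ℕ) (hN : 1 < N) (hNp : N ≠ p) : p ∣ Psi N := by
  induction N using Nat.strong_induction_on with
  | _ N ih =>
    have hsum := sum_Psi N (by omega)
    rw [← Nat.cons_self_properDivisors (by omega), Finset.sum_cons,
      ← Finset.add_sum_erase _ _ (Nat.one_mem_properDivisors_iff_one_lt.2 hN), Psi_one] at hsum
    by_cases hpN : p ∣ N
    · have hmem : p ∈ N.properDivisors.erase 1 := by
        rw [Finset.mem_erase, Nat.mem_properDivisors]
        exact ⟨by omega, hpN, lt_of_le_of_ne (Nat.le_of_dvd (by omega) hpN) (Ne.symm hNp)⟩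
      rw [← Finset.add_sum_erase _ _ hmem] at hsum
      have hrest : p ∣ ∑ d ∈ (N.properDivisors.erase 1).erase p, Psi d := by
        refine Finset.dvd_sum fun d hd => ?_
        simp only [Finset.mem_erase, Nat.mem_properDivisors] at hd
        obtain ⟨hdp, hd1, hdN, hlt⟩ := hd
        have := Nat.pos_of_dvd_of_pos hdN (by omega)
        exact ih d hlt (by omega) hdp
      rw [← add_assoc 1] at hsum
      refine (Nat.dvd_add_left (dvd_add hPsi hrest)).1 ?_
      rw [hsum]
      exact dvd_pow hpN two_ne_zero
    · have hrest : p ∣ ∑ d ∈ N.properDivisors.erase 1, Psi d := by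
        refine Finset.dvd_sum fun d hd => ?_
        simp only [Finset.mem_erase, Nat.mem_properDivisors] at hd
        obtain ⟨hd1, hdN, hlt⟩ := hd
        have := Nat.pos_of_dvd_of_pos hdN (by omega)
        exact ih d hlt (by omega) (fun h => hpN (h ▸ hdN))
      have h1 := hsq N (by exact_mod_cast hpN)
      zify at hsum hrest ⊢
      have h2 := dvd_sub h1 hrest
      rw [← hsum] at h2
      ring_nf at h2
      exact h2

lemma two_dvd_Psi (N : ℕ) (hN : 2 < N) : 2 ∣ Psi N := by
  refine dvd_Psi 2 (by norm_num) (fun a ha => ?_) (by simp [Psi_two]) N (by omega) (by omega)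
  push_cast at *
  obtain ⟨k, hk⟩ := Int.not_even_iff_odd.1 (fun h => ha h.two_dvd)
  exact ⟨2 * k ^ 2 + 2 * k, by rw [hk]; ring⟩

lemma three_dvd_Psi (N : ℕ) (hN : 1 < N) (hN3 : N ≠ 3) : 3 ∣ Psi N := by
  refine dvd_Psi 3 (by norm_num) (fun a ha => ?_) (by simp [Psi_three]) N hN hN3
  push_cast at *
  have h : (3 : ℤ) ∣ a - 1 ∨ (3 : ℤ) ∣ a + 1 := by omega
  rw [show a ^ 2 - 1 = (a - 1) * (a + 1) by ring]
  exact h.elim (fun h => h.mul_right _) (fun h => h.mul_left _)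

lemma three_totient_le_Psi (N : ℕ) (hN : 2 ≤ N) : 3 * N.totient ≤ Psi N := by
  classical
  rw [Psi_eq_card]
  let U : Finset ℕ := {a ∈ Finset.range N | N.Coprime a}
  have hU : U.card = N.totient := rfl
  -- the pairs `(u, 0)`, `(0, u)`, `(u, u)`, encoded as `u` times one of three coefficient vectors
  let C : Finset (ℕ × ℕ) := {(1, 0), (0, 1), (1, 1)}
  have hC : C.card = 3 := rfl
  rw [← hU, ← hC, ← Finset.card_product]
  have hpos : ∀ u ∈ U, u < N ∧ N.Coprime u ∧ u ≠ 0 := by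
    intro u hu
    obtain ⟨h1, h2⟩ := Finset.mem_filter.1 hu
    refine ⟨Finset.mem_range.1 h1, h2, ?_⟩
    rintro rfl
    rw [Nat.coprime_zero_right] at h2
    omega
  refine Finset.card_le_card_of_injOn (fun q => (q.1.1 * q.2, q.1.2 * q.2)) ?_ ?_
  · rintro ⟨c, u⟩ h
    obtain ⟨hc, hu⟩ := Finset.mem_product.1 h
    obtain ⟨h1, h2, h3⟩ := hpos u hu
    have h4 : Nat.gcd u N = 1 := Nat.Coprime.symm h2
    simp only [C, Finset.mem_insert, Finset.mem_singleton] at hc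
    refine mem_primPairs.2 ?_
    rcases hc with rfl | rfl | rfl <;> simp [h1, h4] <;> omega
  · rintro ⟨c, u⟩ h ⟨c', u'⟩ h' heq
    obtain ⟨hc, hu⟩ := Finset.mem_product.1 h
    obtain ⟨hc', hu'⟩ := Finset.mem_product.1 h'
    obtain ⟨-, -, h3⟩ := hpos u hu
    obtain ⟨-, -, h3'⟩ := hpos u' hu'
    simp only [C, Finset.mem_insert, Finset.mem_singleton] at hc hc'
    rcases hc with rfl | rfl | rfl <;> rcases hc' with rfl | rfl | rfl <;> simp_all

lemma six_dvd_Psi_sub (N : ℕ) (hN : 2 ≤ N) (hN3 : N ≠ 3) :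
    (6 : ℤ) ∣ (Psi N : ℤ) - 3 * (N.totient : ℤ) := by
  rcases hN.eq_or_lt with rfl | h
  · simp [Psi_two]
  · have h2 := two_dvd_Psi N h
    have h3 := three_dvd_Psi N (by omega) hN3
    have h4 := (Nat.totient_even h).two_dvd
    omega

/-- For all `n ≥ 1` and `N ≥ 2`, the integer
`n(n+1)(Ψ(N) - 3φ(N)) + 8·ε'(n,N)` is divisible by `12`, where `ε'(n,N) = 1`
if `N = 3` and `n ≡ 1 (mod 3)` and `0` otherwise; consequently
`n(n+1)(Ψ(N) - 3φ(N))/12 + (2/3)·ε'(n,N)` is a nonnegative integer. -/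
theorem twelve_dvd_LnN (n N : ℕ) (hn : 1 ≤ n) (hN : 2 ≤ N) :
    (12 : ℤ) ∣ (n : ℤ) * ((n : ℤ) + 1) *
          ((Psi N : ℤ) - 3 * (Nat.totient N : ℤ)) +
        8 * (if N = 3 ∧ n % 3 = 1 then 1 else 0) ∧
      ∃ k : ℕ, (k : ℚ) =
        (n : ℚ) * ((n : ℚ) + 1) * ((Psi N : ℚ) - 3 * (Nat.totient N : ℚ)) / 12 +
          2 / 3 * (if N = 3 ∧ n % 3 = 1 then 1 else 0) := by
  have hdvd : (12 : ℤ) ∣ (n : ℤ) * ((n : ℤ) + 1) *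
      ((Psi N : ℤ) - 3 * (Nat.totient N : ℤ)) +
        8 * (if N = 3 ∧ n % 3 = 1 then 1 else 0) := by
    have heven : (2 : ℤ) ∣ (n : ℤ) * ((n : ℤ) + 1) := (Int.even_mul_succ_self _).two_dvd
    by_cases h3 : N = 3
    · subst h3
      have ht : Nat.totient 3 = 2 := by decide
      rw [Psi_three, ht]
      obtain ⟨q, r, hr, hnq⟩ : ∃ q r : ℕ, r < 3 ∧ n = 3 * q + r :=
        ⟨n / 3, n % 3, Nat.mod_lt _ (by norm_num), (Nat.div_add_mod n 3).symm⟩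
      have hmod : n % 3 = r := by omega
      have hq : (n : ℤ) * ((n : ℤ) + 1) = 9 * q ^ 2 + 3 * (2 * r + 1) * q + r * (r + 1) := by
        rw [hnq]; push_cast; ring
      rw [hmod]
      interval_cases r <;> norm_num at hq ⊢ <;> omega
    · simp only [h3, false_and, if_false, mul_zero, add_zero]
      exact mul_dvd_mul heven (six_dvd_Psi_sub N hN h3)
  refine ⟨hdvd, ?_⟩
  obtain ⟨k, hk⟩ := hdvd
  have hnonneg : 0 ≤ k := by
    have h1 : (0 : ℤ) ≤ (Psi N : ℤ) - 3 * (Nat.totient N : ℤ) := by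
      have := three_totient_le_Psi N hN
      omega
    have h2 : (0 : ℤ) ≤ 8 * (if N = 3 ∧ n % 3 = 1 then 1 else 0) := by split_ifs <;> norm_num
    have h3 : (0 : ℤ) ≤ (n : ℤ) * ((n : ℤ) + 1) *
      ((Psi N : ℤ) - 3 * (Nat.totient N : ℤ)) := by positivity
    omega
  lift k to ℕ using hnonneg
  refine ⟨k, ?_⟩
  have hkQ := congrArg (Int.cast : ℤ → ℚ) hk
  push_cast at hkQ
  linarith
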